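/- Let Ω ⊂ ℝⁿ be a bounded connected open set whose signed distance function d is C² on a neighborhood of ∂Ω. Assume conditions (reg2), (invariance), (sell), (reg3), with l bounded, and for each λ ∈ (0,1] let u_λ be the unique bounded viscosity solution of λu + H(x,Du,D²u) = 0 in Ω. Then for every h > 0 there exists δ_h > 0 such that for all λ ∈ (0,1] and all x ∈ Ω_{δ_h}: h·log d(x) + min_{Ω∖Ω_{δ_h}} u_λ ≤ u_λ(x) ≤ −h·log d(x) + max_{Ω∖Ω_{δ_h}} u_λ. -/

import Mathlib

open scoped InnerProductSpace Matrix
open Filter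

noncomputable section

/-- The signed distance to the boundary of `Ω`:
`d(x) = dist(x, Ωᶜ) - dist(x, closure Ω)`. -/
def sdist {n : ℕ} (Ω : Set (EuclideanSpace ℝ (Fin n))) (x : EuclideanSpace ℝ (Fin n)) : ℝ :=
  Metric.infDist x Ωᶜ - Metric.infDist x (closure Ω)

/-- The distance to the topological boundary of `Ω`. -/
def bdist {n : ℕ} (Ω : Set (EuclideanSpace ℝ (Fin n))) (x : EuclideanSpace ℝ (Fin n)) : ℝ :=
  Metric.infDist x (frontier Ω)

/-- The Frobenius (Euclidean) norm of a matrix. -/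
def mnorm {n r : ℕ} (M : Matrix (Fin n) (Fin r) ℝ) : ℝ :=
  Real.sqrt (∑ i, ∑ j, M i j ^ 2)

/-- The quadratic form `v ↦ v ⬝ X v`. -/
def quadForm {n : ℕ} (X : Matrix (Fin n) (Fin n) ℝ) (v : EuclideanSpace ℝ (Fin n)) : ℝ :=
  ∑ i, ∑ j, X i j * v i * v j

/-- `Mᵀ v` as a vector in `ℝʳ` (used for `σ(x,α)ᵀ Dd(x)`). -/
def sigmaT {n r : ℕ} (M : Matrix (Fin n) (Fin r) ℝ) (v : EuclideanSpace ℝ (Fin n)) :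
    Fin r → ℝ :=
  Matrix.mulVec Mᵀ (fun i => v i)

/-- The second-order superjet of `u` at `x` relative to `S`. -/
def J2plus {n : ℕ} (S : Set (EuclideanSpace ℝ (Fin n))) (u : EuclideanSpace ℝ (Fin n) → ℝ)
    (x : EuclideanSpace ℝ (Fin n)) :
    Set (EuclideanSpace ℝ (Fin n) × Matrix (Fin n) (Fin n) ℝ) :=
  { pX | pX.2.IsSymm ∧ ∀ ε > (0 : ℝ), ∀ᶠ y in nhdsWithin x S,
      u y - u x - ⟪pX.1, y - x⟫_ℝ - (1 / 2) * quadForm pX.2 (y - x) ≤ ε * ‖y - x‖ ^ 2 }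

/-- The second-order subjet of `u` at `x` relative to `S`: `J^{2,-}u = -J^{2,+}(-u)`. -/
def J2minus {n : ℕ} (S : Set (EuclideanSpace ℝ (Fin n))) (u : EuclideanSpace ℝ (Fin n) → ℝ)
    (x : EuclideanSpace ℝ (Fin n)) :
    Set (EuclideanSpace ℝ (Fin n) × Matrix (Fin n) (Fin n) ℝ) :=
  { qZ | (-qZ.1, -qZ.2) ∈ J2plus S (fun y => -u y) x }

/-- The first-order superdifferential of `u` at `x` relative to `S`. -/
def D1plus {n : ℕ} (S : Set (EuclideanSpace ℝ (Fin n))) (u : EuclideanSpace ℝ (Fin n) → ℝ)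
    (x : EuclideanSpace ℝ (Fin n)) : Set (EuclideanSpace ℝ (Fin n)) :=
  { q | ∀ ε > (0 : ℝ), ∀ᶠ y in nhdsWithin x S, u y - u x - ⟪q, y - x⟫_ℝ ≤ ε * ‖y - x‖ }

/-- The Bellman operator `F(x,p,X) = sup_{α ∈ A} (-b(x,α)·p - tr(σσᵀ X))`. -/
def Fop {n m r : ℕ} (A : Set (Fin m → ℝ))
    (b : EuclideanSpace ℝ (Fin n) → (Fin m → ℝ) → EuclideanSpace ℝ (Fin n))
    (σ : EuclideanSpace ℝ (Fin n) → (Fin m → ℝ) → Matrix (Fin n) (Fin r) ℝ)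
    (x p : EuclideanSpace ℝ (Fin n)) (X : Matrix (Fin n) (Fin n) ℝ) : ℝ :=
  sSup ((fun α => -⟪b x α, p⟫_ℝ - Matrix.trace (σ x α * (σ x α)ᵀ * X)) '' A)

/-- The Hamiltonian `H(x,p,X) = sup_{α ∈ A} (-b(x,α)·p - tr(σσᵀ X) - l(x,α))`. -/
def Hop {n m r : ℕ} (A : Set (Fin m → ℝ))
    (b : EuclideanSpace ℝ (Fin n) → (Fin m → ℝ) → EuclideanSpace ℝ (Fin n))
    (σ : EuclideanSpace ℝ (Fin n) → (Fin m → ℝ) → Matrix (Fin n) (Fin r) ℝ)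
    (l : EuclideanSpace ℝ (Fin n) → (Fin m → ℝ) → ℝ)
    (x p : EuclideanSpace ℝ (Fin n)) (X : Matrix (Fin n) (Fin n) ℝ) : ℝ :=
  sSup ((fun α => -⟪b x α, p⟫_ℝ - Matrix.trace (σ x α * (σ x α)ᵀ * X) - l x α) '' A)

/-- The set of projections of `x` onto `∂Ω`. -/
def projSet {n : ℕ} (Ω : Set (EuclideanSpace ℝ (Fin n))) (x : EuclideanSpace ℝ (Fin n)) :
    Set (EuclideanSpace ℝ (Fin n)) :=
  { z | z ∈ frontier Ω ∧ dist x z = bdist Ω x }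

/-- The interior normal directions at a boundary point `z`. -/
def normalDirs {n : ℕ} (Ω : Set (EuclideanSpace ℝ (Fin n))) (z : EuclideanSpace ℝ (Fin n)) :
    Set (EuclideanSpace ℝ (Fin n)) :=
  { ν | ‖ν‖ = 1 ∧ ∃ x ∈ Ω, x = z + bdist Ω x • ν }

/-! If `u` solves `λu + H(x, Du, D²u) = 0` with `|l| ≤ C`, then `u` and `-u` are both subsolutions
of the extremal equation `λv - sup_α L^α v ≤ C`, where `L^α φ = b·Dφ + tr(σσᵀ D²φ)`. Near `∂Ω`,
`L^α (log d) = L^α d / d - |σᵀDd|² / d²`; the first term is at least `k d^(γ' - 1)`, and since `Dd`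
is constant along the segment from `x` to its projection on `∂Ω`, where `σᵀDd = 0`, the second one
is at most `B² d^(2β - 2)`. As `γ' < 2β - 1`, `L^α (log d) → +∞` uniformly in `α`, so `log d` is a
strict Lyapunov function which tends to `-∞` at `∂Ω`. Penalizing `±u` by `h log d` and letting
`h → 0` gives `|λu| ≤ C`. For fixed `h`, choose `δ_h` with `h L^α (log d) > 2C` on `{d < δ_h}`:
since `λv ≥ -C`, the maximum of `v + h min (log d) (log δ_h)` must lie in `{d ≥ δ_h}`, for `v = u`
as well as for `v = -u`. -/

open Topology Set

section Calculus

variable {F G : Type*} [NormedAddCommGroup F] [NormedSpace ℝ F] [NormedAddCommGroup G]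
  [NormedSpace ℝ G]

theorem isLittleO_sub_taylor_two {f : F → G} {f' : F → F →L[ℝ] G} {f'' : F →L[ℝ] F →L[ℝ] G}
    {x : F} (hf : ∀ᶠ y in 𝓝 x, HasFDerivAt f (f' y) y) (hf' : HasFDerivAt f' f'' x) :
    (fun y => f y - f x - f' x (y - x) - (1 / 2 : ℝ) • f'' (y - x) (y - x))
      =o[𝓝 x] fun y => ‖y - x‖ ^ 2 := by
  have hsymm := second_derivative_symmetric_of_eventually hf hf'
  refine Asymptotics.isLittleO_iff.2 fun ε hε => ?_
  obtain ⟨ρ, hρ, hball⟩ :=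
    Metric.eventually_nhds_iff_ball.1 (hf.and (hf'.isLittleO.bound hε))
  filter_upwards [Metric.ball_mem_nhds x hρ] with y hy
  have hsub : Metric.closedBall x ‖y - x‖ ⊆ Metric.ball x ρ :=
    Metric.closedBall_subset_ball (by rwa [← dist_eq_norm])
  let R : F → G := fun z => f z - f' x (z - x) - (1 / 2 : ℝ) • f'' (z - x) (z - x)
  have hR : ∀ z ∈ Metric.closedBall x ‖y - x‖,
      HasFDerivWithinAt R (f' z - f' x - f'' (z - x)) (Metric.closedBall x ‖y - x‖) z := by
    intro z hz
    have hid : HasFDerivAt (fun z => z - x) (ContinuousLinearMap.id ℝ F) z :=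
      (hasFDerivAt_id z).sub_const x
    have hquad := ((f''.hasFDerivAt.comp z hid).clm_apply hid).const_smul (1 / 2 : ℝ)
    refine (((hball z (hsub hz)).1.sub ((f' x).hasFDerivAt.comp z hid)).sub
      hquad).hasFDerivWithinAt.congr_fderiv ?_
    ext w
    simp [hsymm w z, hsymm w x, ← add_smul, ← two_mul]
  have hbound : ∀ z ∈ Metric.closedBall x ‖y - x‖,
      ‖f' z - f' x - f'' (z - x)‖ ≤ ε * ‖y - x‖ := fun z hz =>
    (hball z (hsub hz)).2.trans (by gcongr; simpa [dist_eq_norm] using hz)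
  have hmean := (convex_closedBall x ‖y - x‖).norm_image_sub_le_of_norm_hasFDerivWithin_le
    hR hbound (Metric.mem_closedBall_self (norm_nonneg _)) (y := y) (by simp [dist_eq_norm])
  calc ‖f y - f x - f' x (y - x) - (1 / 2 : ℝ) • f'' (y - x) (y - x)‖ = ‖R y - R x‖ := by
        simp only [R, sub_self, map_zero, smul_zero, sub_zero]
        congr 1
        abel
    _ ≤ ε * ‖y - x‖ * ‖y - x‖ := hmean
    _ = ε * ‖‖y - x‖ ^ 2‖ := by simp [sq, mul_assoc]

theorem hasFDerivAt_innerSL_comp {H : Type*} [NormedAddCommGroup H] [InnerProductSpace ℝ H]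
    {g : F → H} {g' : F →L[ℝ] H} {x : F} (hg : HasFDerivAt g g' x) :
    HasFDerivAt (fun y => innerSL ℝ (g y)) ((innerSL ℝ).comp g') x :=
  (innerSL ℝ).hasFDerivAt.comp x hg

theorem tendsto_inv_mul_rpow_sub_inv_sq_mul_rpow_sq_atTop {k β γ : ℝ} (B : ℝ) (hk : 0 < k)
    (hγ : γ < 1) (hγβ : γ < 2 * β - 1) :
    Tendsto (fun t : ℝ => t⁻¹ * (k * t ^ γ) - t⁻¹ ^ 2 * (B * t ^ β) ^ 2) (𝓝[>] 0) atTop := by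
  have hblowup : Tendsto (fun t : ℝ => t ^ (γ - 1)) (𝓝[>] 0) atTop :=
    tendsto_rpow_neg_nhdsGT_zero (by linarith)
  have hvanish : Tendsto (fun t : ℝ => t ^ (2 * β - 1 - γ)) (𝓝[>] 0) (𝓝 0) := by
    have h := (Real.continuousAt_rpow_const 0 (2 * β - 1 - γ) (Or.inr (by linarith))).tendsto
    rw [Real.zero_rpow (by linarith)] at h
    exact h.mono_left nhdsWithin_le_nhds
  have hfactor : Tendsto (fun t : ℝ => k - B ^ 2 * t ^ (2 * β - 1 - γ)) (𝓝[>] 0) (𝓝 k) := by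
    simpa using (hvanish.const_mul (B ^ 2)).const_sub k
  refine (hblowup.atTop_mul_pos hk hfactor).congr' ?_
  filter_upwards [self_mem_nhdsWithin] with t (ht : 0 < t)
  have hfirst : t ^ (γ - 1) = t⁻¹ * t ^ γ := by
    rw [Real.rpow_sub_one ht.ne', div_eq_inv_mul]
  have hsecond : t ^ (γ - 1) * t ^ (2 * β - 1 - γ) = t⁻¹ ^ 2 * (t ^ β) ^ 2 := by
    rw [← Real.rpow_add ht, show γ - 1 + (2 * β - 1 - γ) = β * 2 - 2 by ring, Real.rpow_sub ht,
      Real.rpow_mul ht.le, Real.rpow_two, Real.rpow_two, div_eq_inv_mul, inv_pow]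
  linear_combination k * hfirst - B ^ 2 * hsecond

end Calculus

section Distance

theorem infDist_lineMap_eq_mul {F : Type*} [NormedAddCommGroup F] [NormedSpace ℝ F] {s : Set F}
    {x z : F} (hz : z ∈ s) (hxz : Metric.infDist x s = dist x z) {t : ℝ} (ht : t ∈ Icc (0 : ℝ) 1) :
    Metric.infDist (AffineMap.lineMap z x t) s = t * dist x z := by
  refine le_antisymm ?_ ?_
  · calc Metric.infDist (AffineMap.lineMap z x t) s
        ≤ dist (AffineMap.lineMap z x t) z := Metric.infDist_le_dist_of_mem hz
      _ = t * dist x z := by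
        rw [dist_lineMap_left, Real.norm_of_nonneg ht.1, dist_comm z x]
  · have hle := Metric.infDist_le_infDist_add_dist (s := s) (x := x)
      (y := AffineMap.lineMap z x t)
    rw [hxz, dist_right_lineMap, Real.norm_of_nonneg (sub_nonneg.2 ht.2), dist_comm z x] at hle
    linarith

theorem norm_smul_eq_sub_of_hasGradientAt {F : Type*} [NormedAddCommGroup F]
    [InnerProductSpace ℝ F] [CompleteSpace F] {f : F → ℝ} {x z p : F} {s : ℝ}
    (hf : ∀ t ∈ Icc (0 : ℝ) 1, f (AffineMap.lineMap z x t) = t * dist x z) (hs : s ∈ Icc (0 : ℝ) 1)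
    (hfp : HasGradientAt f p (AffineMap.lineMap z x s)) (hp : ‖p‖ = 1) :
    ‖x - z‖ • p = x - z := by
  have hchain : HasDerivWithinAt (f ∘ AffineMap.lineMap z x) ⟪p, x - z⟫_ℝ (Icc (0 : ℝ) 1) s :=
    (hfp.hasFDerivAt.comp_hasDerivAt s AffineMap.hasDerivAt_lineMap).hasDerivWithinAt
  have hlinear : HasDerivWithinAt (f ∘ AffineMap.lineMap z x) (dist x z) (Icc (0 : ℝ) 1) s := by
    refine HasDerivWithinAt.congr ?_ hf (hf s hs)
    simpa using ((hasDerivAt_id s).mul_const (dist x z)).hasDerivWithinAt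
  have hinner : ⟪p, x - z⟫_ℝ = ‖p‖ * ‖x - z‖ := by
    rw [(uniqueDiffOn_Icc zero_lt_one s hs).eq_deriv _ hchain hlinear, hp, one_mul, dist_eq_norm]
  simpa [hp] using inner_eq_norm_mul_iff_real.1 hinner

end Distance

section Matrices

variable {n r : ℕ} (M N : Matrix (Fin n) (Fin r) ℝ) (X : Matrix (Fin n) (Fin n) ℝ)
  (p v : EuclideanSpace ℝ (Fin n))

theorem quadForm_eq_inner : quadForm X v = ⟪Matrix.toEuclideanLin X v, v⟫_ℝ := by
  simp only [quadForm, PiLp.inner_apply, Matrix.toLpLin_apply, Matrix.mulVec, dotProduct,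
    RCLike.inner_apply, conj_trivial, Finset.mul_sum]
  exact Finset.sum_congr rfl fun i _ => Finset.sum_congr rfl fun j _ => by ring

theorem sigmaT_sub : sigmaT (M - N) p = sigmaT M p - sigmaT N p := by
  rw [sigmaT, Matrix.transpose_sub, Matrix.sub_mulVec, sigmaT, sigmaT]

theorem mnorm_nonneg : 0 ≤ mnorm M :=
  Real.sqrt_nonneg _

theorem sum_sigmaT_sq_le : ∑ j, sigmaT M p j ^ 2 ≤ (mnorm M * ‖p‖) ^ 2 := by
  rw [mnorm, mul_pow, Real.sq_sqrt (by positivity), EuclideanSpace.real_norm_sq_eq,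
    Finset.sum_comm, Finset.sum_mul]
  exact Finset.sum_le_sum fun j _ =>
    Finset.sum_mul_sq_le_sq_mul_sq Finset.univ (fun i => M i j) fun i => p i

theorem trace_mul_transpose_mul_vecMulVec :
    Matrix.trace (M * Mᵀ * Matrix.vecMulVec p p) = ∑ j, sigmaT M p j ^ 2 := by
  rw [Matrix.mul_vecMulVec, Matrix.trace_vecMulVec, ← Matrix.mulVec_mulVec, dotProduct_comm,
    Matrix.dotProduct_mulVec, ← Matrix.mulVec_transpose]
  simp only [dotProduct, sigmaT, sq]

theorem abs_trace_transpose_mul_le : |Matrix.trace (Mᵀ * N)| ≤ mnorm M * mnorm N := by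
  rw [mnorm, mnorm, ← Real.sqrt_mul (by positivity)]
  refine Real.abs_le_sqrt ?_
  simp only [Matrix.trace, Matrix.diag, Matrix.mul_apply, Matrix.transpose_apply]
  rw [Finset.sum_comm]
  simp only [← Finset.sum_product']
  exact Finset.sum_mul_sq_le_sq_mul_sq _ (fun ij : Fin n × Fin r => M ij.1 ij.2)
    fun ij => N ij.1 ij.2

open scoped Matrix.Norms.Frobenius in
theorem mnorm_mul_le : mnorm (X * M) ≤ mnorm X * mnorm M := by
  have hnorm {k l : ℕ} (P : Matrix (Fin k) (Fin l) ℝ) : mnorm P = ‖P‖ := by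
    simp [mnorm, Matrix.frobenius_norm_def, Real.sqrt_eq_rpow]
  simpa only [hnorm] using Matrix.frobenius_norm_mul X M

theorem abs_trace_mul_transpose_mul_le :
    |Matrix.trace (M * Mᵀ * X)| ≤ mnorm X * mnorm M ^ 2 := by
  calc |Matrix.trace (M * Mᵀ * X)| = |Matrix.trace (Mᵀ * (X * M))| := by
        rw [Matrix.mul_assoc, Matrix.trace_mul_comm, Matrix.mul_assoc]
    _ ≤ mnorm M * (mnorm X * mnorm M) := (abs_trace_transpose_mul_le _ _).trans
        (mul_le_mul_of_nonneg_left (mnorm_mul_le M X) (mnorm_nonneg M))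
    _ = mnorm X * mnorm M ^ 2 := by ring

end Matrices

section Hessian

variable {n : ℕ}

/-- `f` is twice differentiable at `x` with gradient `p` and Hessian matrix `X`: it has a gradient
at all points near `x`, and the gradient field takes the value `p` and has the derivative `X`
at `x`. -/
def HasHessianAt (f : EuclideanSpace ℝ (Fin n) → ℝ) (p : EuclideanSpace ℝ (Fin n))
    (X : Matrix (Fin n) (Fin n) ℝ) (x : EuclideanSpace ℝ (Fin n)) : Prop :=
  ∃ g : EuclideanSpace ℝ (Fin n) → EuclideanSpace ℝ (Fin n), g x = p ∧
    (∀ᶠ y in 𝓝 x, HasGradientAt f (g y) y) ∧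
    HasFDerivAt g (LinearMap.toContinuousLinearMap (Matrix.toEuclideanLin X)) x

namespace HasHessianAt

variable {f : EuclideanSpace ℝ (Fin n) → ℝ} {p x : EuclideanSpace ℝ (Fin n)}
  {X : Matrix (Fin n) (Fin n) ℝ}

theorem const (c : ℝ) (x : EuclideanSpace ℝ (Fin n)) : HasHessianAt (fun _ => c) 0 0 x := by
  refine ⟨fun _ => 0, rfl, .of_forall fun y => hasGradientAt_const y c, ?_⟩
  simpa using hasFDerivAt_const (0 : EuclideanSpace ℝ (Fin n)) x

theorem const_mul (hf : HasHessianAt f p X x) (c : ℝ) :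
    HasHessianAt (fun y => c * f y) (c • p) (c • X) x := by
  obtain ⟨g, rfl, hfg, hg⟩ := hf
  refine ⟨fun y => c • g y, rfl, hfg.mono fun y hy => ?_, ?_⟩
  · rw [hasGradientAt_iff_hasFDerivAt, map_smul]
    exact hy.hasFDerivAt.const_mul c
  · rw [map_smul, map_smul]
    exact hg.const_smul c

theorem log (hf : HasHessianAt f p X x) (hx : f x ≠ 0) :
    HasHessianAt (fun y => Real.log (f y)) ((f x)⁻¹ • p)
      ((f x)⁻¹ • X - (f x)⁻¹ ^ 2 • Matrix.vecMulVec p p) x := by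
  obtain ⟨g, rfl, hfg, hg⟩ := hf
  have hfx := hfg.self_of_nhds.hasFDerivAt
  refine ⟨fun y => (f y)⁻¹ • g y, rfl, ?_, ?_⟩
  · filter_upwards [hfg, hfx.continuousAt.eventually_ne hx] with y hy hy0
    rw [hasGradientAt_iff_hasFDerivAt, map_smul]
    exact hy.hasFDerivAt.log hy0
  · refine (((hasDerivAt_inv hx).comp_hasFDerivAt x hfx).smul hg).congr_fderiv ?_
    ext v i
    have hinner : (g x).ofLp ⬝ᵥ v.ofLp = ⟪g x, v⟫_ℝ := by
      simp [PiLp.inner_apply, dotProduct, mul_comm]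
    simp [Matrix.vecMulVec_mulVec, hinner]
    ring

theorem isSymm (hf : HasHessianAt f p X x) : X.IsSymm := by
  obtain ⟨g, -, hfg, hg⟩ := hf
  ext i j
  have hcomm := second_derivative_symmetric_of_eventually
    (hfg.mono fun y hy => hy.hasFDerivAt) (hasFDerivAt_innerSL_comp hg)
    (EuclideanSpace.single i 1) (EuclideanSpace.single j 1)
  simpa [EuclideanSpace.inner_single_right] using hcomm

theorem isLittleO (hf : HasHessianAt f p X x) :
    (fun y => f y - f x - ⟪p, y - x⟫_ℝ - (1 / 2) * quadForm X (y - x))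
      =o[𝓝 x] fun y => ‖y - x‖ ^ 2 := by
  obtain ⟨g, rfl, hfg, hg⟩ := hf
  refine (isLittleO_sub_taylor_two (hfg.mono fun y hy => hy.hasFDerivAt)
    (hasFDerivAt_innerSL_comp hg)).congr_left fun y => ?_
  simp [quadForm_eq_inner, inner_sub_left]

theorem mem_J2plus_of_isLocalMaxOn {S : Set (EuclideanSpace ℝ (Fin n))}
    {v : EuclideanSpace ℝ (Fin n) → ℝ} (hf : HasHessianAt f p X x)
    (hmax : IsLocalMaxOn (fun y => v y - f y) S x) : (p, X) ∈ J2plus S v x := by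
  refine ⟨hf.isSymm, fun ε hε => ?_⟩
  filter_upwards [hmax, (hf.isLittleO.bound hε).filter_mono nhdsWithin_le_nhds] with y hy htaylor
  have hle := (le_abs_self _).trans htaylor
  rw [norm_pow, norm_norm] at hle
  linarith

end HasHessianAt

end Hessian

section Generator

variable {n r : ℕ}

/-- The linear operator `L φ = b·Dφ + tr(σσᵀ D²φ)` of a diffusion with drift `b` and dispersion
matrix `σ` at a fixed point, evaluated at `Dφ = p` and `D²φ = X`. -/
def generator (b : EuclideanSpace ℝ (Fin n)) (σ : Matrix (Fin n) (Fin r) ℝ)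
    (p : EuclideanSpace ℝ (Fin n)) (X : Matrix (Fin n) (Fin n) ℝ) : ℝ :=
  ⟪b, p⟫_ℝ + Matrix.trace (σ * σᵀ * X)

variable (b p : EuclideanSpace ℝ (Fin n)) (σ : Matrix (Fin n) (Fin r) ℝ)
  (X : Matrix (Fin n) (Fin n) ℝ) (c : ℝ)

theorem generator_smul : generator b σ (c • p) (c • X) = c * generator b σ p X := by
  simp only [generator, inner_smul_right, Matrix.mul_smul, Matrix.trace_smul, smul_eq_mul]
  ring

theorem generator_zero : generator b σ 0 0 = 0 := by
  simp [generator]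

theorem generator_neg : generator b σ (-p) (-X) = -generator b σ p X := by
  simpa using generator_smul b p σ X (-1)

theorem generator_smul_sub_sq_smul_vecMulVec :
    generator b σ (c • p) (c • X - c ^ 2 • Matrix.vecMulVec p p) =
      c * generator b σ p X - c ^ 2 * ∑ j, sigmaT σ p j ^ 2 := by
  simp only [generator, inner_smul_right, Matrix.mul_sub, Matrix.mul_smul, Matrix.trace_sub,
    Matrix.trace_smul, trace_mul_transpose_mul_vecMulVec, smul_eq_mul]
  ring

theorem abs_generator_le : |generator b σ p X| ≤ ‖b‖ * ‖p‖ + mnorm X * mnorm σ ^ 2 :=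
  (abs_add_le _ _).trans
    (add_le_add (abs_real_inner_le_norm b p) (abs_trace_mul_transpose_mul_le σ X))

end Generator

section Barrier

theorem exists_isMaxOn_add_mul_min {Y : Type*} [TopologicalSpace Y] {s : Set Y} {v w : Y → ℝ}
    {M h : ℝ} (hne : s.Nonempty) (hv : UpperSemicontinuousOn v s) (hvM : ∀ y ∈ s, v y ≤ M)
    (hw : ContinuousOn w s) (hcompact : ∀ a, IsCompact {y ∈ s | a ≤ w y}) (c : ℝ) (hh : 0 < h) :
    ∃ y₀ ∈ s, IsMaxOn (fun y => v y + h * min (w y) c) s y₀ := by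
  obtain ⟨x, hx⟩ := hne
  let f : Y → ℝ := fun y => v y + h * min (w y) c
  let a : ℝ := min (w x) ((f x - M) / h)
  have hf : UpperSemicontinuousOn f s :=
    hv.add (continuousOn_const.mul (hw.inf continuousOn_const)).upperSemicontinuousOn
  obtain ⟨y₀, ⟨hy₀, -⟩, hmax⟩ :=
    UpperSemicontinuousOn.exists_isMaxOn (s := {y ∈ s | a ≤ w y}) ⟨x, hx, min_le_left _ _⟩
      (hcompact a) (hf.mono (sep_subset s _))
  refine ⟨y₀, hy₀, fun y hy => ?_⟩
  by_cases hay : a ≤ w y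
  · exact hmax ⟨hy, hay⟩
  have hlow : w y < (f x - M) / h := (not_le.1 hay).trans_le (min_le_right _ _)
  calc f y ≤ M + h * w y :=
        add_le_add (hvM y hy) (mul_le_mul_of_nonneg_left (min_le_left _ _) hh.le)
    _ ≤ f x := by linarith [(lt_div_iff₀ hh).1 hlow]
    _ ≤ f y₀ := hmax ⟨hx, min_le_left _ _⟩

variable {n r : ℕ} {κ : Type*}

/-- `v` is a viscosity subsolution of the extremal equation
`λ v - sup_{α ∈ A} (b(·,α)·Dv + tr(σσᵀ(·,α) D²v)) ≤ C` in `Ω`. The supremum, which has the opposite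
sign to the one in the Hamiltonian, is expressed through its upper bounds `S`, so that an unbounded
supremum imposes no condition. -/
def IsExtremalSubsolution (Ω : Set (EuclideanSpace ℝ (Fin n))) (A : Set κ)
    (b : EuclideanSpace ℝ (Fin n) → κ → EuclideanSpace ℝ (Fin n))
    (σ : EuclideanSpace ℝ (Fin n) → κ → Matrix (Fin n) (Fin r) ℝ) (lam C : ℝ)
    (v : EuclideanSpace ℝ (Fin n) → ℝ) : Prop :=
  ∀ x ∈ Ω, ∀ pX ∈ J2plus Ω v x, ∀ S : ℝ,
    (∀ α ∈ A, generator (b x α) (σ x α) pX.1 pX.2 ≤ S) → lam * v x ≤ C + S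

/-- `w` is a Lyapunov function for the controlled generators in `Ω`: it tends to `-∞` at the
boundary (its superlevel sets are compact), and it is a strict classical subsolution, with
`b(·,α)·Dw + tr(σσᵀ(·,α) D²w) ≥ N` for all `α ∈ A`, on the sublevel set `w < c`. -/
structure IsBarrier (Ω : Set (EuclideanSpace ℝ (Fin n))) (A : Set κ)
    (b : EuclideanSpace ℝ (Fin n) → κ → EuclideanSpace ℝ (Fin n))
    (σ : EuclideanSpace ℝ (Fin n) → κ → Matrix (Fin n) (Fin r) ℝ)
    (w : EuclideanSpace ℝ (Fin n) → ℝ) (c N : ℝ) : Prop where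
  continuousOn : ContinuousOn w Ω
  isCompact_superlevel : ∀ a, IsCompact {y ∈ Ω | a ≤ w y}
  exists_hasHessianAt : ∀ x ∈ Ω, w x < c → ∃ p X, HasHessianAt w p X x ∧
    ∀ α ∈ A, N ≤ generator (b x α) (σ x α) p X

variable {Ω : Set (EuclideanSpace ℝ (Fin n))} {A : Set κ}
  {b : EuclideanSpace ℝ (Fin n) → κ → EuclideanSpace ℝ (Fin n)}
  {σ : EuclideanSpace ℝ (Fin n) → κ → Matrix (Fin n) (Fin r) ℝ}
  {v w : EuclideanSpace ℝ (Fin n) → ℝ} {x : EuclideanSpace ℝ (Fin n)} {lam c h C M N : ℝ}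

namespace IsExtremalSubsolution

theorem mul_le_of_isMaxOn (hsub : IsExtremalSubsolution Ω A b σ lam C v) (hx : x ∈ Ω)
    (hmax : IsMaxOn v Ω x) : lam * v x ≤ C := by
  have hjet : ((0 : EuclideanSpace ℝ (Fin n)), (0 : Matrix (Fin n) (Fin n) ℝ)) ∈ J2plus Ω v x :=
    (HasHessianAt.const 0 x).mem_J2plus_of_isLocalMaxOn (by simpa using hmax.localize)
  simpa using hsub x hx _ hjet 0 fun α _ => (generator_zero _ _).le

theorem mul_le_sub_of_isMaxOn_add_mul (hsub : IsExtremalSubsolution Ω A b σ lam C v)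
    (hw : IsBarrier Ω A b σ w c N) (hh : 0 < h) (hx : x ∈ Ω) (hxc : w x < c)
    (hmax : IsMaxOn (fun y => v y + h * min (w y) c) Ω x) : lam * v x ≤ C - h * N := by
  obtain ⟨p, X, hwX, hN⟩ := hw.exists_hasHessianAt x hx hxc
  have hlt : ∀ᶠ y in 𝓝[Ω] x, w y < c := (hw.continuousOn x hx).eventually_lt_const hxc
  have hjet : ((-h) • p, (-h) • X) ∈ J2plus Ω v x := by
    refine (hwX.const_mul (-h)).mem_J2plus_of_isLocalMaxOn ?_
    filter_upwards [hlt, hmax.localize] with y hyc hy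
    rw [min_eq_left hyc.le, min_eq_left hxc.le] at hy
    linarith
  have hgen : ∀ α ∈ A, generator (b x α) (σ x α) ((-h) • p) ((-h) • X) ≤ -h * N := fun α hα => by
    rw [generator_smul]
    exact mul_le_mul_of_nonpos_left (hN α hα) (neg_nonpos.2 hh.le)
  linarith [hsub x hx _ hjet _ hgen]

theorem exists_le_of_isBarrier (hsub : IsExtremalSubsolution Ω A b σ lam C v)
    (hw : IsBarrier Ω A b σ w c N) (hv : UpperSemicontinuousOn v Ω) (hvM : ∀ y ∈ Ω, v y ≤ M)
    (hh : 0 < h) (hx : x ∈ Ω) :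
    ∃ y ∈ Ω, v x + h * min (w x) c ≤ v y + h * min (w y) c ∧
      (c ≤ w y ∨ lam * v y ≤ C - h * N) := by
  obtain ⟨y, hy, hmax⟩ := exists_isMaxOn_add_mul_min ⟨x, hx⟩ hv hvM hw.continuousOn
    hw.isCompact_superlevel c hh
  exact ⟨y, hy, hmax hx, (le_or_gt c (w y)).imp_right fun hyc =>
    hsub.mul_le_sub_of_isMaxOn_add_mul hw hh hy hyc hmax⟩

theorem le_of_forall_superlevel_le (hsub : IsExtremalSubsolution Ω A b σ lam C v)
    (hw : IsBarrier Ω A b σ w c N) (hN : 0 ≤ N) (hv : UpperSemicontinuousOn v Ω)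
    (hvM : ∀ y ∈ Ω, v y ≤ M) (hlam : 0 < lam) {m : ℝ} (hm : C ≤ lam * m)
    (hK : ∀ y ∈ Ω, c ≤ w y → v y ≤ m) (hx : x ∈ Ω) : v x ≤ m := by
  have hpenalized : ∀ h > 0, v x + h * min (w x) c ≤ m + h * c := fun h hh => by
    obtain ⟨y, hy, hle, hyc⟩ := hsub.exists_le_of_isBarrier hw hv hvM hh hx
    have hym : v y ≤ m := hyc.elim (hK y hy) fun hlow =>
      le_of_mul_le_mul_left (by linarith [mul_nonneg hh.le hN]) hlam
    exact hle.trans (add_le_add hym (mul_le_mul_of_nonneg_left (min_le_right _ _) hh.le))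
  have hlim (a e : ℝ) : Tendsto (fun h : ℝ => a + h * e) (𝓝[>] 0) (𝓝 a) := by
    have hcont : Continuous fun h : ℝ => a + h * e := by fun_prop
    simpa using (hcont.tendsto 0).mono_left nhdsWithin_le_nhds
  exact le_of_tendsto_of_tendsto (hlim _ _) (hlim _ _)
    (eventually_nhdsWithin_of_forall hpenalized)

theorem mul_le_of_isBarrier (hsub : IsExtremalSubsolution Ω A b σ lam C v)
    (hw : IsBarrier Ω A b σ w c N) (hN : 0 ≤ N) (hv : UpperSemicontinuousOn v Ω)
    (hvM : ∀ y ∈ Ω, v y ≤ M) (hlam : 0 < lam) (hx : x ∈ Ω) : lam * v x ≤ C := by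
  by_cases hK : ∀ y ∈ Ω, c ≤ w y → lam * v y ≤ C
  · rw [← le_div_iff₀' hlam]
    exact hsub.le_of_forall_superlevel_le hw hN hv hvM hlam (mul_div_cancel₀ C hlam.ne').ge
      (fun y hy hyc => (le_div_iff₀' hlam).2 (hK y hy hyc)) hx
  · push Not at hK
    obtain ⟨z, hz, hzc, hCz⟩ := hK
    obtain ⟨y, ⟨hy, -⟩, hmaxK⟩ := UpperSemicontinuousOn.exists_isMaxOn (s := {y ∈ Ω | c ≤ w y})
      ⟨z, hz, hzc⟩ (hw.isCompact_superlevel c) (hv.mono (sep_subset Ω _))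
    have hzy : C < lam * v y :=
      hCz.trans_le (mul_le_mul_of_nonneg_left (hmaxK ⟨hz, hzc⟩) hlam.le)
    have hmax : IsMaxOn v Ω y := fun x hx => hsub.le_of_forall_superlevel_le hw hN hv hvM hlam
      hzy.le (fun y' hy' hyc' => hmaxK ⟨hy', hyc'⟩) hx
    exact absurd (hsub.mul_le_of_isMaxOn hy hmax) hzy.not_ge

theorem le_neg_mul_add_sSup (hsub : IsExtremalSubsolution Ω A b σ lam C v)
    (hneg : IsExtremalSubsolution Ω A b σ lam C fun y => -v y) (hw : IsBarrier Ω A b σ w c N)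
    (hN : 0 ≤ N) (hv : ContinuousOn v Ω) (hvM : ∀ y ∈ Ω, |v y| ≤ M) (hlam : 0 < lam)
    (hh : 0 < h) (hNC : 2 * C < h * N) (hc : c ≤ 0) (hx : x ∈ Ω) (hxc : w x ≤ c) :
    v x ≤ -(h * w x) + sSup (v '' {y ∈ Ω | c ≤ w y}) := by
  have hvM' : ∀ y ∈ Ω, v y ≤ M := fun y hy => (le_abs_self _).trans (hvM y hy)
  have hlow : ∀ y ∈ Ω, lam * -v y ≤ C := fun y hy => hneg.mul_le_of_isBarrier hw hN
    hv.neg.upperSemicontinuousOn (fun z hz => (neg_le_abs _).trans (hvM z hz)) hlam hy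
  obtain ⟨y, hy, hle, hyc⟩ :=
    hsub.exists_le_of_isBarrier hw hv.upperSemicontinuousOn hvM' hh hx
  have hcy : c ≤ w y := hyc.resolve_right (by linarith [hlow y hy])
  rw [min_eq_left hxc, min_eq_right hcy] at hle
  have hsup : v y ≤ sSup (v '' {y ∈ Ω | c ≤ w y}) :=
    le_csSup ⟨M, forall_mem_image.2 fun z hz => hvM' z hz.1⟩ (mem_image_of_mem v ⟨hy, hcy⟩)
  linarith [mul_nonpos_of_nonneg_of_nonpos hh.le hc]

theorem mul_add_sInf_le (hsub : IsExtremalSubsolution Ω A b σ lam C v)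
    (hneg : IsExtremalSubsolution Ω A b σ lam C fun y => -v y) (hw : IsBarrier Ω A b σ w c N)
    (hN : 0 ≤ N) (hv : ContinuousOn v Ω) (hvM : ∀ y ∈ Ω, |v y| ≤ M) (hlam : 0 < lam)
    (hh : 0 < h) (hNC : 2 * C < h * N) (hc : c ≤ 0) (hx : x ∈ Ω) (hxc : w x ≤ c) :
    h * w x + sInf (v '' {y ∈ Ω | c ≤ w y}) ≤ v x := by
  have hupper := hneg.le_neg_mul_add_sSup (by simpa only [neg_neg] using hsub) hw hN hv.neg
    (by simpa only [abs_neg] using hvM) hlam hh hNC hc hx hxc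
  rw [← image_image Neg.neg v, image_neg_eq_neg, Real.sSup_neg] at hupper
  linarith

end IsExtremalSubsolution

end Barrier

section Hamiltonian

variable {n m r : ℕ} {Ω : Set (EuclideanSpace ℝ (Fin n))} {A : Set (Fin m → ℝ)}
  {b : EuclideanSpace ℝ (Fin n) → (Fin m → ℝ) → EuclideanSpace ℝ (Fin n)}
  {σ : EuclideanSpace ℝ (Fin n) → (Fin m → ℝ) → Matrix (Fin n) (Fin r) ℝ}
  {l : EuclideanSpace ℝ (Fin n) → (Fin m → ℝ) → ℝ}
  {v : EuclideanSpace ℝ (Fin n) → ℝ} {x p : EuclideanSpace ℝ (Fin n)}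
  {X : Matrix (Fin n) (Fin n) ℝ} {lam Cb Cσ C S : ℝ}

theorem Hop_eq_sSup_generator :
    Hop A b σ l x p X = sSup ((fun α => -generator (b x α) (σ x α) p X - l x α) '' A) := by
  simp only [Hop, generator, neg_add']

theorem neg_add_le_Hop (hA : A.Nonempty) (hb : ∀ α ∈ A, ‖b x α‖ ≤ Cb)
    (hσ : ∀ α ∈ A, mnorm (σ x α) ≤ Cσ) (hl : ∀ α ∈ A, |l x α| ≤ C)
    (hS : ∀ α ∈ A, generator (b x α) (σ x α) p X ≤ S) : -(C + S) ≤ Hop A b σ l x p X := by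
  have hbdd : BddAbove ((fun α => -generator (b x α) (σ x α) p X - l x α) '' A) := by
    refine ⟨Cb * ‖p‖ + mnorm X * Cσ ^ 2 + C, forall_mem_image.2 fun α hα => ?_⟩
    calc -generator (b x α) (σ x α) p X - l x α
        ≤ |generator (b x α) (σ x α) p X| + |l x α| :=
          add_le_add (neg_le_abs _) (neg_le_abs _)
      _ ≤ ‖b x α‖ * ‖p‖ + mnorm X * mnorm (σ x α) ^ 2 + |l x α| := by
          gcongr; exact abs_generator_le ..
      _ ≤ Cb * ‖p‖ + mnorm X * Cσ ^ 2 + C := by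
          gcongr
          exacts [hb α hα, mnorm_nonneg X, mnorm_nonneg _, hσ α hα, hl α hα]
  obtain ⟨α, hα⟩ := hA
  rw [Hop_eq_sSup_generator]
  refine le_csSup_of_le hbdd (mem_image_of_mem _ hα) ?_
  linarith [hS α hα, (le_abs_self _).trans (hl α hα)]

theorem Hop_neg_le (hA : A.Nonempty) (hl : ∀ α ∈ A, |l x α| ≤ C)
    (hS : ∀ α ∈ A, generator (b x α) (σ x α) p X ≤ S) : Hop A b σ l x (-p) (-X) ≤ C + S := by
  rw [Hop_eq_sSup_generator]
  refine csSup_le (hA.image _) (forall_mem_image.2 fun α hα => ?_)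
  rw [generator_neg, neg_neg]
  linarith [hS α hα, (neg_le_abs _).trans (hl α hα)]

theorem isExtremalSubsolution_of_add_Hop_nonpos (hA : A.Nonempty)
    (hb : ∀ x ∈ Ω, ∀ α ∈ A, ‖b x α‖ ≤ Cb) (hσ : ∀ x ∈ Ω, ∀ α ∈ A, mnorm (σ x α) ≤ Cσ)
    (hl : ∀ x ∈ Ω, ∀ α ∈ A, |l x α| ≤ C)
    (hv : ∀ x ∈ Ω, ∀ pX ∈ J2plus Ω v x, lam * v x + Hop A b σ l x pX.1 pX.2 ≤ 0) :
    IsExtremalSubsolution Ω A b σ lam C v := fun x hx pX hpX S hS => by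
  linarith [hv x hx pX hpX, neg_add_le_Hop hA (hb x hx) (hσ x hx) (hl x hx) hS]

theorem isExtremalSubsolution_neg_of_add_Hop_nonneg (hA : A.Nonempty)
    (hl : ∀ x ∈ Ω, ∀ α ∈ A, |l x α| ≤ C)
    (hv : ∀ x ∈ Ω, ∀ qZ ∈ J2minus Ω v x, 0 ≤ lam * v x + Hop A b σ l x qZ.1 qZ.2) :
    IsExtremalSubsolution Ω A b σ lam C fun y => -v y := fun x hx pX hpX S hS => by
  have hjet : (-pX.1, -pX.2) ∈ J2minus Ω v x := by simpa [J2minus] using hpX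
  linarith [hv x hx _ hjet, Hop_neg_le hA (hl x hx) hS]

end Hamiltonian

section SignedDistance

variable {n : ℕ} {Ω : Set (EuclideanSpace ℝ (Fin n))} {x : EuclideanSpace ℝ (Fin n)}

theorem continuous_sdist (Ω : Set (EuclideanSpace ℝ (Fin n))) : Continuous (sdist Ω) :=
  (Metric.continuous_infDist_pt _).sub (Metric.continuous_infDist_pt _)

theorem sdist_of_mem_closure (hx : x ∈ closure Ω) : sdist Ω x = Metric.infDist x Ωᶜ := by
  rw [sdist, Metric.infDist_zero_of_mem hx, sub_zero]

theorem sdist_pos_iff (hΩo : IsOpen Ω) (hne : Ωᶜ.Nonempty) : 0 < sdist Ω x ↔ x ∈ Ω := by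
  refine ⟨fun hpos => of_not_not fun hx => ?_, fun hx => ?_⟩
  · rw [sdist, Metric.infDist_zero_of_mem hx, zero_sub, neg_pos] at hpos
    exact hpos.not_ge Metric.infDist_nonneg
  · rw [sdist_of_mem_closure (subset_closure hx)]
    exact (hΩo.isClosed_compl.notMem_iff_infDist_pos hne).1 (not_not_intro hx)

theorem exists_mem_frontier_sdist_lineMap (hΩo : IsOpen Ω) (hne : Ωᶜ.Nonempty) (hx : x ∈ Ω) :
    ∃ z ∈ frontier Ω, ∀ t ∈ Icc (0 : ℝ) 1, sdist Ω (AffineMap.lineMap z x t) = t * dist x z := by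
  obtain ⟨z, hz, hxz⟩ := hΩo.isClosed_compl.exists_infDist_eq_dist hne x
  have hpos : 0 < dist x z := dist_pos.2 fun h => hz (h ▸ hx)
  have hopen : MapsTo (AffineMap.lineMap z x) (Ioc (0 : ℝ) 1) Ω := fun t ht =>
    of_not_not fun hmem => (mul_pos ht.1 hpos).ne' <|
      (infDist_lineMap_eq_mul hz hxz (Ioc_subset_Icc_self ht)).symm.trans
        (Metric.infDist_zero_of_mem hmem)
  have hclosed : MapsTo (AffineMap.lineMap z x) (Icc (0 : ℝ) 1) (closure Ω) := by
    simpa only [closure_Ioc zero_ne_one] using hopen.closure AffineMap.lineMap_continuous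
  refine ⟨z, ⟨?_, by rwa [hΩo.interior_eq]⟩, fun t ht => ?_⟩
  · simpa using hclosed (left_mem_Icc.2 zero_le_one)
  · rw [sdist_of_mem_closure (hclosed ht), infDist_lineMap_eq_mul hz hxz ht]

variable {δ₀ : ℝ} {Dd : EuclideanSpace ℝ (Fin n) → EuclideanSpace ℝ (Fin n)}

theorem nonempty_compl_of_norm_gradient_eq_one (hΩbdd : Bornology.IsBounded Ω) (hδ₀ : 0 < δ₀)
    (hDdnorm : ∀ x, |sdist Ω x| < δ₀ → ‖Dd x‖ = 1) : Ωᶜ.Nonempty := by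
  rw [nonempty_compl]
  rintro rfl
  have hnorm : ‖Dd 0‖ = 1 := hDdnorm 0 (by simpa [sdist, Metric.infDist_zero_of_mem] using hδ₀)
  have : Nontrivial (EuclideanSpace ℝ (Fin n)) :=
    ⟨Dd 0, 0, norm_ne_zero_iff.1 (hnorm ▸ one_ne_zero)⟩
  exact NormedSpace.unbounded_univ ℝ _ hΩbdd

theorem exists_mem_frontier_gradient_eq (hΩo : IsOpen Ω) (hne : Ωᶜ.Nonempty) (hx : x ∈ Ω)
    (hxδ : sdist Ω x < δ₀) (hDd : ∀ x, |sdist Ω x| < δ₀ → HasGradientAt (sdist Ω) (Dd x) x)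
    (hDdnorm : ∀ x, |sdist Ω x| < δ₀ → ‖Dd x‖ = 1) :
    ∃ z ∈ frontier Ω, ‖x - z‖ = sdist Ω x ∧ Dd x = Dd z := by
  obtain ⟨z, hz, hseg⟩ := exists_mem_frontier_sdist_lineMap hΩo hne hx
  have hxz : sdist Ω x = ‖x - z‖ := by
    simpa [dist_eq_norm] using hseg 1 (right_mem_Icc.2 zero_le_one)
  have hz0 : sdist Ω z = 0 := by simpa using hseg 0 (left_mem_Icc.2 zero_le_one)
  have hpos : 0 < ‖x - z‖ := hxz ▸ (sdist_pos_iff hΩo hne).2 hx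
  have hxδ' : |sdist Ω x| < δ₀ := by rwa [hxz, abs_norm, ← hxz]
  have hzδ : |sdist Ω z| < δ₀ := by
    rw [hz0, abs_zero]
    exact (abs_nonneg _).trans_lt hxδ'
  have hgx : ‖x - z‖ • Dd x = x - z :=
    norm_smul_eq_sub_of_hasGradientAt hseg (right_mem_Icc.2 zero_le_one)
      (by simpa using hDd x hxδ') (hDdnorm x hxδ')
  have hgz : ‖x - z‖ • Dd z = x - z :=
    norm_smul_eq_sub_of_hasGradientAt hseg (left_mem_Icc.2 zero_le_one)
      (by simpa using hDd z hzδ) (hDdnorm z hzδ)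
  exact ⟨z, hz, hxz.symm, smul_right_injective _ hpos.ne' (hgx.trans hgz.symm)⟩

variable {r : ℕ} {κ : Type*} {A : Set κ}
  {b : EuclideanSpace ℝ (Fin n) → κ → EuclideanSpace ℝ (Fin n)}
  {σ : EuclideanSpace ℝ (Fin n) → κ → Matrix (Fin n) (Fin r) ℝ}
  {D2d : EuclideanSpace ℝ (Fin n) → Matrix (Fin n) (Fin n) ℝ} {N δ β B : ℝ}

theorem sum_sigmaT_gradient_sq_le {τ : EuclideanSpace ℝ (Fin n) → Matrix (Fin n) (Fin r) ℝ}
    (hΩo : IsOpen Ω) (hne : Ωᶜ.Nonempty) (hx : x ∈ Ω) (hxδ : sdist Ω x < δ₀)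
    (hDd : ∀ x, |sdist Ω x| < δ₀ → HasGradientAt (sdist Ω) (Dd x) x)
    (hDdnorm : ∀ x, |sdist Ω x| < δ₀ → ‖Dd x‖ = 1)
    (hτ : ∀ x ∈ closure Ω, ∀ y ∈ closure Ω, mnorm (τ x - τ y) ≤ B * ‖x - y‖ ^ β)
    (htangent : ∀ z ∈ frontier Ω, sigmaT (τ z) (Dd z) = 0) :
    ∑ j, sigmaT (τ x) (Dd x) j ^ 2 ≤ (B * sdist Ω x ^ β) ^ 2 := by
  obtain ⟨z, hz, hxz, hgrad⟩ := exists_mem_frontier_gradient_eq hΩo hne hx hxδ hDd hDdnorm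
  have hnorm : ‖Dd x‖ = 1 :=
    hDdnorm x (by rwa [abs_of_pos ((sdist_pos_iff hΩo hne).2 hx)])
  have hdiff : sigmaT (τ x) (Dd x) = sigmaT (τ x - τ z) (Dd x) := by
    rw [sigmaT_sub, hgrad, htangent z hz, sub_zero]
  calc ∑ j, sigmaT (τ x) (Dd x) j ^ 2 ≤ (mnorm (τ x - τ z) * ‖Dd x‖) ^ 2 :=
        hdiff ▸ sum_sigmaT_sq_le _ _
    _ ≤ (B * sdist Ω x ^ β) ^ 2 := by
        rw [hnorm, mul_one, ← hxz]
        exact pow_le_pow_left₀ (mnorm_nonneg _)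
          (hτ x (subset_closure hx) z (frontier_subset_closure hz)) 2

theorem isCompact_le_log_sdist (hΩo : IsOpen Ω) (hΩbdd : Bornology.IsBounded Ω)
    (hne : Ωᶜ.Nonempty) (a : ℝ) : IsCompact {y ∈ Ω | a ≤ Real.log (sdist Ω y)} := by
  have heq : {y ∈ Ω | a ≤ Real.log (sdist Ω y)} = {y | Real.exp a ≤ sdist Ω y} := by
    ext y
    refine ⟨fun hy => (Real.le_log_iff_exp_le ((sdist_pos_iff hΩo hne).2 hy.1)).1 hy.2,
      fun hy => ?_⟩
    have hpos : 0 < sdist Ω y := (Real.exp_pos a).trans_le hy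
    exact ⟨(sdist_pos_iff hΩo hne).1 hpos, (Real.le_log_iff_exp_le hpos).2 hy⟩
  refine Metric.isCompact_of_isClosed_isBounded ?_ (hΩbdd.subset (sep_subset _ _))
  rw [heq]
  exact isClosed_le continuous_const (continuous_sdist Ω)

theorem isBarrier_log_sdist (hΩo : IsOpen Ω) (hΩbdd : Bornology.IsBounded Ω) (hne : Ωᶜ.Nonempty)
    (hDd : ∀ x, |sdist Ω x| < δ₀ → HasGradientAt (sdist Ω) (Dd x) x)
    (hD2d : ∀ x, |sdist Ω x| < δ₀ →
      HasFDerivAt Dd (LinearMap.toContinuousLinearMap (Matrix.toEuclideanLin (D2d x))) x)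
    (hδ : 0 < δ) (hδδ₀ : δ ≤ δ₀)
    (hN : ∀ x ∈ Ω, sdist Ω x < δ → ∀ α ∈ A,
      N ≤ (sdist Ω x)⁻¹ * generator (b x α) (σ x α) (Dd x) (D2d x) -
        (sdist Ω x)⁻¹ ^ 2 * ∑ j, sigmaT (σ x α) (Dd x) j ^ 2) :
    IsBarrier Ω A b σ (fun x => Real.log (sdist Ω x)) (Real.log δ) N where
  continuousOn := (continuous_sdist Ω).continuousOn.log fun _ hx =>
    ((sdist_pos_iff hΩo hne).2 hx).ne'
  isCompact_superlevel := isCompact_le_log_sdist hΩo hΩbdd hne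
  exists_hasHessianAt x hx hxc := by
    have hpos := (sdist_pos_iff hΩo hne).2 hx
    have hxδ : sdist Ω x < δ := (Real.log_lt_log_iff hpos hδ).1 hxc
    have hxδ₀ : |sdist Ω x| < δ₀ := by rw [abs_of_pos hpos]; exact hxδ.trans_le hδδ₀
    have hnhds : ∀ᶠ y in 𝓝 x, |sdist Ω y| < δ₀ :=
      (continuous_sdist Ω).abs.continuousAt.eventually_lt_const hxδ₀
    have hhess : HasHessianAt (sdist Ω) (Dd x) (D2d x) x := ⟨Dd, rfl, hnhds.mono hDd, hD2d x hxδ₀⟩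
    refine ⟨_, _, hhess.log hpos.ne', fun α hα => ?_⟩
    rw [generator_smul_sub_sq_smul_vecMulVec]
    exact hN x hx hxδ α hα

theorem exists_isBarrier_log_sdist (hΩo : IsOpen Ω) (hΩbdd : Bornology.IsBounded Ω)
    (hne : Ωᶜ.Nonempty) (hδ₀ : 0 < δ₀)
    (hDd : ∀ x, |sdist Ω x| < δ₀ → HasGradientAt (sdist Ω) (Dd x) x)
    (hDdnorm : ∀ x, |sdist Ω x| < δ₀ → ‖Dd x‖ = 1)
    (hD2d : ∀ x, |sdist Ω x| < δ₀ →
      HasFDerivAt Dd (LinearMap.toContinuousLinearMap (Matrix.toEuclideanLin (D2d x))) x)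
    (hβ : β ≤ 1)
    (hσ : ∀ x ∈ closure Ω, ∀ y ∈ closure Ω, ∀ α ∈ A, mnorm (σ x α - σ y α) ≤ B * ‖x - y‖ ^ β)
    (hinv : ∃ δ > (0 : ℝ), ∃ k > (0 : ℝ), ∃ γ : ℝ, γ < 2 * β - 1 ∧
      ∀ z ∈ frontier Ω, ∀ α ∈ A, sigmaT (σ z α) (Dd z) = 0 ∧
        ∀ x ∈ Ω, sdist Ω x < δ → k * sdist Ω x ^ γ ≤ generator (b x α) (σ x α) (Dd x) (D2d x))
    (N : ℝ) :
    ∃ δ ∈ Ioc (0 : ℝ) 1, IsBarrier Ω A b σ (fun x => Real.log (sdist Ω x)) (Real.log δ) N := by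
  obtain ⟨δ₁, hδ₁, k, hk, γ, hγ, hinv⟩ := hinv
  obtain ⟨δ₂, ⟨hδ₂, hδ₂1⟩, hlarge⟩ := (mem_nhdsGT_iff_exists_mem_Ioc_Ioo_subset zero_lt_one).1
    ((tendsto_inv_mul_rpow_sub_inv_sq_mul_rpow_sq_atTop B hk (by linarith) hγ).eventually_ge_atTop
      N)
  refine ⟨min δ₀ (min δ₁ δ₂), ⟨by positivity, (min_le_right _ _).trans ((min_le_right _ _).trans
    hδ₂1)⟩, isBarrier_log_sdist hΩo hΩbdd hne hDd hD2d (by positivity) (min_le_left _ _) ?_⟩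
  intro x hx hxδ α hα
  obtain ⟨hxδ₀, hxδ₁, hxδ₂⟩ : sdist Ω x < δ₀ ∧ sdist Ω x < δ₁ ∧ sdist Ω x < δ₂ := by
    simpa only [lt_min_iff] using hxδ
  have hpos := (sdist_pos_iff hΩo hne).2 hx
  obtain ⟨z, hz, -⟩ := exists_mem_frontier_sdist_lineMap hΩo hne hx
  have hdrift : k * sdist Ω x ^ γ ≤ generator (b x α) (σ x α) (Dd x) (D2d x) :=
    (hinv z hz α hα).2 x hx hxδ₁
  have hdiffusion : ∑ j, sigmaT (σ x α) (Dd x) j ^ 2 ≤ (B * sdist Ω x ^ β) ^ 2 :=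
    sum_sigmaT_gradient_sq_le (τ := fun y => σ y α) hΩo hne hx hxδ₀ hDd hDdnorm
      (fun y hy y' hy' => hσ y hy y' hy' α hα) fun z hz => (hinv z hz α hα).1
  exact (hlarge ⟨hpos, hxδ₂⟩).trans (by gcongr)

end SignedDistance

theorem statement_16_general
    {n m r : ℕ} (Ω : Set (EuclideanSpace ℝ (Fin n)))
    (hΩo : IsOpen Ω) (hΩbdd : Bornology.IsBounded Ω)
    (A : Set (Fin m → ℝ)) (hAne : A.Nonempty)
    (b : EuclideanSpace ℝ (Fin n) → (Fin m → ℝ) → EuclideanSpace ℝ (Fin n))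
    (σ : EuclideanSpace ℝ (Fin n) → (Fin m → ℝ) → Matrix (Fin n) (Fin r) ℝ)
    (hbBdd : ∃ C, ∀ x ∈ closure Ω, ∀ α ∈ A, ‖b x α‖ ≤ C)
    (hσBdd : ∃ C, ∀ x ∈ closure Ω, ∀ α ∈ A, mnorm (σ x α) ≤ C)
    (l : EuclideanSpace ℝ (Fin n) → (Fin m → ℝ) → ℝ)
    (hlBdd : ∃ C, ∀ x ∈ closure Ω, ∀ α ∈ A, |l x α| ≤ C)
    (δ₀ : ℝ) (hδ₀ : 0 < δ₀)
    (Dd : EuclideanSpace ℝ (Fin n) → EuclideanSpace ℝ (Fin n))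
    (D2d : EuclideanSpace ℝ (Fin n) → Matrix (Fin n) (Fin n) ℝ)
    (hDd : ∀ x, |sdist Ω x| < δ₀ → HasGradientAt (sdist Ω) (Dd x) x)
    (hDdnorm : ∀ x, |sdist Ω x| < δ₀ → ‖Dd x‖ = 1)
    (hD2d : ∀ x, |sdist Ω x| < δ₀ →
      HasFDerivAt Dd (LinearMap.toContinuousLinearMap (Matrix.toEuclideanLin (D2d x))) x)
    (β B : ℝ) (hβhigh : β ≤ 1)
    (hreg2 : ∀ x ∈ closure Ω, ∀ y ∈ closure Ω, ∀ α ∈ A,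
      mnorm (σ x α - σ y α) ≤ B * ‖x - y‖ ^ β)
    (hinv : ∃ δ > (0 : ℝ), ∃ k > (0 : ℝ), ∃ γ : ℝ, γ < 2 * β - 1 ∧
      ∀ z ∈ frontier Ω, ∀ α ∈ A, sigmaT (σ z α) (Dd z) = 0 ∧
        ∀ x ∈ Ω, sdist Ω x < δ →
          k * sdist Ω x ^ γ ≤
            ⟪b x α, Dd x⟫_ℝ + Matrix.trace (σ x α * (σ x α)ᵀ * D2d x)) :
    ∀ h > (0 : ℝ), ∃ δh > (0 : ℝ), ∀ lam : ℝ, 0 < lam → ∀ v : EuclideanSpace ℝ (Fin n) → ℝ,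
      (ContinuousOn v Ω ∧ (∃ C, ∀ x ∈ Ω, |v x| ≤ C) ∧
        (∀ x ∈ Ω,
          (∀ pX ∈ J2plus Ω v x, lam * v x + Hop A b σ l x pX.1 pX.2 ≤ 0) ∧
          (∀ qZ ∈ J2minus Ω v x, 0 ≤ lam * v x + Hop A b σ l x qZ.1 qZ.2))) →
      ∀ x ∈ Ω, sdist Ω x < δh →
        h * Real.log (sdist Ω x) + sInf (v '' {y ∈ Ω | δh ≤ sdist Ω y}) ≤ v x ∧
        v x ≤ -(h * Real.log (sdist Ω x)) + sSup (v '' {y ∈ Ω | δh ≤ sdist Ω y}) := by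
  intro h hh
  have hne := nonempty_compl_of_norm_gradient_eq_one hΩbdd hδ₀ hDdnorm
  obtain ⟨Cb, hb⟩ := hbBdd
  obtain ⟨Cσ, hσ⟩ := hσBdd
  obtain ⟨C, hl⟩ := hlBdd
  obtain ⟨δ, ⟨hδ, hδ1⟩, hw⟩ := exists_isBarrier_log_sdist (b := b) hΩo hΩbdd hne hδ₀ hDd hDdnorm
    hD2d hβhigh hreg2 hinv ((2 * |C| + 1) / h)
  refine ⟨δ, hδ, fun lam hlam v ⟨hv, ⟨M, hvM⟩, hjets⟩ x hx hxδ => ?_⟩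
  have hl' : ∀ y ∈ Ω, ∀ α ∈ A, |l y α| ≤ |C| := fun y hy α hα =>
    (hl y (subset_closure hy) α hα).trans (le_abs_self C)
  have hsub : IsExtremalSubsolution Ω A b σ lam |C| v :=
    isExtremalSubsolution_of_add_Hop_nonpos hAne (fun y hy => hb y (subset_closure hy))
      (fun y hy => hσ y (subset_closure hy)) hl' fun y hy => (hjets y hy).1
  have hneg : IsExtremalSubsolution Ω A b σ lam |C| fun y => -v y :=
    isExtremalSubsolution_neg_of_add_Hop_nonneg hAne hl' fun y hy => (hjets y hy).2
  have hN : 0 ≤ (2 * |C| + 1) / h := by positivity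
  have hNC : 2 * |C| < h * ((2 * |C| + 1) / h) := by
    rw [mul_div_cancel₀ _ hh.ne']
    exact lt_add_one _
  have hpos : ∀ y ∈ Ω, 0 < sdist Ω y := fun y => (sdist_pos_iff hΩo hne).2
  have hK : {y ∈ Ω | δ ≤ sdist Ω y} = {y ∈ Ω | Real.log δ ≤ Real.log (sdist Ω y)} :=
    sep_ext_iff.2 fun y hy => (Real.log_le_log_iff hδ (hpos y hy)).symm
  have hc : Real.log δ ≤ 0 := Real.log_nonpos hδ.le hδ1
  have hxc : Real.log (sdist Ω x) ≤ Real.log δ := Real.log_le_log (hpos x hx) hxδ.le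
  rw [hK]
  exact ⟨hsub.mul_add_sInf_le hneg hw hN hv hvM hlam hh hNC hc hx hxc,
    hsub.le_neg_mul_add_sSup hneg hw hN hv hvM hlam hh hNC hc hx hxc⟩

theorem statement_16
    {n m r : ℕ} (Ω : Set (EuclideanSpace ℝ (Fin n)))
    (hΩo : IsOpen Ω) (hΩconn : IsConnected Ω) (hΩbdd : Bornology.IsBounded Ω)
    (A : Set (Fin m → ℝ)) (hA : IsClosed A) (hAne : A.Nonempty)
    (b : EuclideanSpace ℝ (Fin n) → (Fin m → ℝ) → EuclideanSpace ℝ (Fin n))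
    (σ : EuclideanSpace ℝ (Fin n) → (Fin m → ℝ) → Matrix (Fin n) (Fin r) ℝ)
    (hbBdd : ∃ C, ∀ x ∈ closure Ω, ∀ α ∈ A, ‖b x α‖ ≤ C)
    (hσBdd : ∃ C, ∀ x ∈ closure Ω, ∀ α ∈ A, mnorm (σ x α) ≤ C)
    (hbCont : ContinuousOn (fun q : EuclideanSpace ℝ (Fin n) × (Fin m → ℝ) => b q.1 q.2)
      (closure Ω ×ˢ A))
    (hσCont : ContinuousOn (fun q : EuclideanSpace ℝ (Fin n) × (Fin m → ℝ) => σ q.1 q.2)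
      (closure Ω ×ˢ A))
    (l : EuclideanSpace ℝ (Fin n) → (Fin m → ℝ) → ℝ)
    (hlBdd : ∃ C, ∀ x ∈ closure Ω, ∀ α ∈ A, |l x α| ≤ C)
    (δ₀ : ℝ) (hδ₀ : 0 < δ₀)
    (Dd : EuclideanSpace ℝ (Fin n) → EuclideanSpace ℝ (Fin n))
    (D2d : EuclideanSpace ℝ (Fin n) → Matrix (Fin n) (Fin n) ℝ)
    (hDd : ∀ x, |sdist Ω x| < δ₀ → HasGradientAt (sdist Ω) (Dd x) x)
    (hDdnorm : ∀ x, |sdist Ω x| < δ₀ → ‖Dd x‖ = 1)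
    (hD2d : ∀ x, |sdist Ω x| < δ₀ →
      HasFDerivAt Dd (LinearMap.toContinuousLinearMap (Matrix.toEuclideanLin (D2d x))) x)
    (hD2dCont : ContinuousOn D2d {x | |sdist Ω x| < δ₀})
    (β B : ℝ) (hβlow : 1 / 2 < β) (hβhigh : β ≤ 1) (hB : 0 < B)
    (hreg2 : ∀ x ∈ closure Ω, ∀ y ∈ closure Ω, ∀ α ∈ A,
      mnorm (σ x α - σ y α) ≤ B * ‖x - y‖ ^ β)
    (hinv : ∃ δ > (0 : ℝ), ∃ k > (0 : ℝ), ∃ γ : ℝ, γ < 2 * β - 1 ∧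
      ∀ z ∈ frontier Ω, ∀ α ∈ A, sigmaT (σ z α) (Dd z) = 0 ∧
        ∀ x ∈ Ω, sdist Ω x < δ →
          k * sdist Ω x ^ γ ≤
            ⟪b x α, Dd x⟫_ℝ + Matrix.trace (σ x α * (σ x α)ᵀ * D2d x))
    (hsell : ∀ x ∈ Ω, ∀ α ∈ A, (σ x α * (σ x α)ᵀ).PosDef)
    (γ₃ B₃ : ℝ) (hγ₃pos : 0 < γ₃) (hγ₃le : γ₃ ≤ 1) (hB₃ : 0 < B₃)
    (hreg3 : ∀ x ∈ closure Ω, ∀ y ∈ closure Ω, ∀ α ∈ A,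
      ‖b x α - b y α‖ ≤ B₃ * ‖x - y‖ ^ γ₃ ∧ |l x α - l y α| ≤ B₃ * ‖x - y‖ ^ γ₃)
    (u : ℝ → EuclideanSpace ℝ (Fin n) → ℝ)
    (hu : ∀ lam : ℝ, 0 < lam → lam ≤ 1 →
      ContinuousOn (u lam) Ω ∧ (∃ C, ∀ x ∈ Ω, |u lam x| ≤ C) ∧
      (∀ x ∈ Ω,
        (∀ pX ∈ J2plus Ω (u lam) x, lam * (u lam) x + Hop A b σ l x pX.1 pX.2 ≤ 0) ∧
        (∀ qZ ∈ J2minus Ω (u lam) x, 0 ≤ lam * (u lam) x + Hop A b σ l x qZ.1 qZ.2))) :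
    ∀ h > (0 : ℝ), ∃ δh > (0 : ℝ), ∀ lam : ℝ, 0 < lam → lam ≤ 1 →
      ∀ x ∈ Ω, sdist Ω x < δh →
        h * Real.log (sdist Ω x) + sInf (u lam '' {y ∈ Ω | δh ≤ sdist Ω y}) ≤ u lam x ∧
        u lam x ≤ -(h * Real.log (sdist Ω x)) + sSup (u lam '' {y ∈ Ω | δh ≤ sdist Ω y}) := by
  intro h hh
  obtain ⟨δ, hδ, hbounds⟩ := statement_16_general Ω hΩo hΩbdd A hAne b σ hbBdd hσBdd l hlBdd δ₀ hδ₀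
    Dd D2d hDd hDdnorm hD2d β B hβhigh hreg2 hinv h hh
  exact ⟨δ, hδ, fun lam hlam hlam1 => hbounds lam hlam (u lam) (hu lam hlam hlam1)⟩
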